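/- For every natural number k and every σ > 0 there exists a constant C > 0, depending only on k and σ, with the following property: for every nondegenerate triangle τ ⊂ ℝ² whose diameter h_τ satisfies h_τ² ≤ σ·|τ| (where |τ| is the area of τ), with element bubble function ψ_τ = 27·λ₁·λ₂·λ₃ built from the barycentric coordinates of τ, and for every polynomial function v : ℝ² → ℝ of total degree at most k, one has ∫_τ |∇(ψ_τ v)|² dx ≤ C h_τ^{-2} ∫_τ v² dx; equivalently ‖∇(ψ_τ v)‖_{0,τ} ≤ C h_τ^{-1} ‖v‖_{0,τ}. -/

import Mathlib

open MeasureTheory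

/-!
Every simplex `τ` is the image of one fixed reference simplex under an affine map `x ↦ A x + c`,
which carries barycentric coordinates to barycentric coordinates and polynomials of degree at most
`k` to such polynomials. On the reference simplex the estimate compares two quadratic forms on a
finite-dimensional space, the one on the right being definite. Pulling the gradient back costs a
factor `‖A⁻¹‖ ^ 2`. Hadamard's inequality in an orthonormal basis starting with `z / ‖z‖` gives
`|det A| ‖z‖ ≤ ‖A‖ ^ (n - 1) ‖A z‖`, that is `|det A| ‖A⁻¹‖ ≤ ‖A‖ ^ (n - 1)`. As `‖A‖` is at most
a multiple of `h = diam τ` and `|det A|` is a multiple of `|τ|`, shape regularity turns this into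
`‖A⁻¹‖ ≤ const / h`.
-/

section AffineChangeOfVariables

lemma norm_le_diam_image_div {E F : Type*} [NormedAddCommGroup E] [NormedSpace ℝ E]
    [NormedAddCommGroup F] [NormedSpace ℝ F] (A : E →L[ℝ] F) (c : F) {T : Set E} {x₀ : E} {ρ : ℝ}
    (hρ : 0 < ρ) (hball : Metric.closedBall x₀ ρ ⊆ T)
    (hbdd : Bornology.IsBounded ((fun x ↦ A x + c) '' T)) :
    ‖A‖ ≤ Metric.diam ((fun x ↦ A x + c) '' T) / ρ := by
  refine ContinuousLinearMap.opNorm_le_of_unit_norm (by positivity) fun u hu ↦ ?_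
  have hx₀ : x₀ ∈ T := hball (Metric.mem_closedBall_self hρ.le)
  have hxu : x₀ + ρ • u ∈ T := hball (by simp [norm_smul, hu, abs_of_pos hρ])
  rw [le_div_iff₀ hρ]
  calc ‖A u‖ * ρ = dist (A (x₀ + ρ • u) + c) (A x₀ + c) := by
        simp [norm_smul, abs_of_pos hρ, mul_comm]
    _ ≤ _ := Metric.dist_le_diam_of_mem hbdd (Set.mem_image_of_mem _ hxu)
        (Set.mem_image_of_mem _ hx₀)

lemma norm_fderiv_le_mul_norm_symm {E F G : Type*} [NormedAddCommGroup E] [NormedSpace ℝ E]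
    [NormedAddCommGroup F] [NormedSpace ℝ F] [NormedAddCommGroup G] [NormedSpace ℝ G]
    (A : E ≃L[ℝ] F) (c : F) (f : F → G) (x : E) :
    ‖fderiv ℝ f (A x + c)‖ ≤ ‖fderiv ℝ (fun z ↦ f (A z + c)) x‖ * ‖(A.symm : F →L[ℝ] E)‖ := by
  have hchain : fderiv ℝ (fun z ↦ f (A z + c)) x = (fderiv ℝ f (A x + c)).comp (A : E →L[ℝ] F) := by
    rw [← fderiv_comp_add_right]
    exact A.comp_right_fderiv (f := fun y ↦ f (y + c))
  have hinv : fderiv ℝ f (A x + c)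
      = (fderiv ℝ (fun z ↦ f (A z + c)) x).comp (A.symm : F →L[ℝ] E) := by
    rw [hchain, ContinuousLinearMap.comp_assoc]
    simp
  rw [hinv]
  exact ContinuousLinearMap.opNorm_comp_le _ _

variable {E : Type*} [NormedAddCommGroup E] [NormedSpace ℝ E] [FiniteDimensional ℝ E]
  [MeasurableSpace E] [BorelSpace E] (μ : Measure E) [μ.IsAddHaarMeasure]

lemma addHaar_real_image_affine (A : E →L[ℝ] E) (c : E) (T : Set E) :
    μ.real ((fun x ↦ A x + c) '' T) = |A.det| * μ.real T := by
  rw [← Set.image_image (· + c) A, Measure.real, Measure.real]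
  simp

lemma setIntegral_image_affine {F : Type*} [NormedAddCommGroup F] [NormedSpace ℝ F]
    (A : E ≃L[ℝ] E) (c : E) {T : Set E} (hT : MeasurableSet T) (g : E → F) :
    ∫ y in (fun x ↦ A x + c) '' T, g y ∂μ
      = |(A : E →L[ℝ] E).det| • ∫ x in T, g (A x + c) ∂μ := by
  rw [integral_image_eq_integral_abs_det_fderiv_smul μ hT
    (fun x _ ↦ (A.hasFDerivAt.add_const c).hasFDerivWithinAt)
    (fun x _ y _ h ↦ A.injective (add_right_cancel h)), integral_smul]

lemma setIntegral_norm_fderiv_sq_image_affine_le {F : Type*} [NormedAddCommGroup F]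
    [NormedSpace ℝ F] (A : E ≃L[ℝ] E) (c : E) {T : Set E} (hT : MeasurableSet T) {f : E → F}
    (hf : IntegrableOn (fun x ↦ ‖fderiv ℝ (fun z ↦ f (A z + c)) x‖ ^ 2) T μ) :
    ∫ y in (fun x ↦ A x + c) '' T, ‖fderiv ℝ f y‖ ^ 2 ∂μ
      ≤ |(A : E →L[ℝ] E).det| * (‖(A.symm : E →L[ℝ] E)‖ ^ 2 *
        ∫ x in T, ‖fderiv ℝ (fun z ↦ f (A z + c)) x‖ ^ 2 ∂μ) := by
  rw [setIntegral_image_affine μ A c hT, smul_eq_mul]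
  gcongr
  rw [← integral_const_mul]
  refine integral_mono_of_nonneg (.of_forall fun x ↦ by positivity) (hf.const_mul _)
    (.of_forall fun x ↦ ?_)
  simp only [← mul_pow, mul_comm ‖(A.symm : E →L[ℝ] E)‖]
  gcongr
  exact norm_fderiv_le_mul_norm_symm A c f x

end AffineChangeOfVariables

section InverseNorm

open Module

variable {E : Type*} [NormedAddCommGroup E] [InnerProductSpace ℝ E]

lemma abs_det_le_prod_norm {n : ℕ} (b : OrthonormalBasis (Fin n) ℝ E) (A : E →ₗ[ℝ] E) :
    |LinearMap.det A| ≤ ∏ i, ‖A (b i)‖ := by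
  have : Fact (finrank ℝ E = n) := ⟨by simpa using finrank_eq_card_basis b.toBasis⟩
  have hdet : b.toBasis.det (A ∘ b) = LinearMap.det A := by
    rw [← b.coe_toBasis, Basis.det_comp_basis]
    simp
  rw [← hdet, ← b.toBasis.orientation.volumeForm_robust' b]
  exact b.toBasis.orientation.abs_volumeForm_apply_le _

variable [FiniteDimensional ℝ E]

lemma exists_orthonormalBasis_apply_eq {n : ℕ}
    (hn : finrank ℝ E = n + 1) {u : E} (hu : ‖u‖ = 1) :
    ∃ b : OrthonormalBasis (Fin (n + 1)) ℝ E, b 0 = u := by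
  have hv : Orthonormal ℝ (({0} : Set (Fin (n + 1))).domRestrict fun _ ↦ u) :=
    ⟨fun _ ↦ hu, fun i j hij ↦ (hij (Subsingleton.elim i j)).elim⟩
  obtain ⟨b, hb⟩ := hv.exists_orthonormalBasis_extension_of_card_eq (by simpa using hn)
  exact ⟨b, hb 0 rfl⟩

lemma abs_det_mul_norm_le (A : E →L[ℝ] E) (z : E) :
    |A.det| * ‖z‖ ≤ ‖A‖ ^ (finrank ℝ E - 1) * ‖A z‖ := by
  obtain rfl | hz := eq_or_ne z 0
  · simp
  obtain ⟨n, hn⟩ := Nat.exists_eq_add_one.2 ((finrank_pos_iff_exists_ne_zero (R := ℝ)).2 ⟨z, hz⟩)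
  obtain ⟨b, hb⟩ := exists_orthonormalBasis_apply_eq hn (norm_smul_inv_norm (𝕜 := ℝ) hz)
  have hAz : ‖A (b 0)‖ * ‖z‖ = ‖A z‖ := by
    rw [hb, map_smul, norm_smul]
    simp [mul_right_comm, hz]
  calc |A.det| * ‖z‖
      ≤ (∏ i, ‖A (b i)‖) * ‖z‖ := by gcongr; exact abs_det_le_prod_norm b A
    _ = (∏ i : Fin n, ‖A (b i.succ)‖) * ‖A z‖ := by
      rw [Fin.prod_univ_succ, mul_right_comm, hAz, mul_comm]
    _ ≤ (∏ _i : Fin n, ‖A‖) * ‖A z‖ := by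
      gcongr with i
      simpa using A.le_opNorm (b i.succ)
    _ = ‖A‖ ^ (finrank ℝ E - 1) * ‖A z‖ := by simp [hn]

lemma abs_det_mul_norm_symm_le (A : E ≃L[ℝ] E) :
    |(A : E →L[ℝ] E).det| * ‖(A.symm : E →L[ℝ] E)‖ ≤ ‖(A : E →L[ℝ] E)‖ ^ (finrank ℝ E - 1) := by
  have hdet : 0 < |(A : E →L[ℝ] E).det| := abs_pos.2 A.toLinearEquiv.isUnit_det'.ne_zero
  rw [← le_div_iff₀' hdet]
  refine ContinuousLinearMap.opNorm_le_bound _ (by positivity) fun y ↦ ?_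
  rw [div_mul_eq_mul_div, le_div_iff₀' hdet]
  simpa using abs_det_mul_norm_le (A : E →L[ℝ] E) (A.symm y)

lemma norm_symm_le_div_diam_image [Nontrivial E] [MeasurableSpace E] [BorelSpace E]
    (μ : Measure E) [μ.IsAddHaarMeasure] (A : E ≃L[ℝ] E) (c : E) {T : Set E} {x₀ : E} {ρ σ : ℝ}
    (hρ : 0 < ρ) (hball : Metric.closedBall x₀ ρ ⊆ T)
    (hbdd : Bornology.IsBounded ((fun x ↦ A x + c) '' T))
    (hσ : Metric.diam ((fun x ↦ A x + c) '' T) ^ finrank ℝ E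
      ≤ σ * μ.real ((fun x ↦ A x + c) '' T)) :
    ‖(A.symm : E →L[ℝ] E)‖
      ≤ σ * μ.real T / ρ ^ (finrank ℝ E - 1) / Metric.diam ((fun x ↦ A x + c) '' T) := by
  have hA : ‖(A : E →L[ℝ] E)‖ ≤ Metric.diam ((fun x ↦ A x + c) '' T) / ρ :=
    norm_le_diam_image_div (A : E →L[ℝ] E) c hρ hball hbdd
  have hvol := addHaar_real_image_affine μ (A : E →L[ℝ] E) c T
  simp only [ContinuousLinearEquiv.coe_coe] at hvol
  rw [hvol] at hσ
  set h := Metric.diam ((fun x ↦ A x + c) '' T)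
  have hh : 0 < h := (div_pos_iff_of_pos_right hρ).1 (A.norm_pos.trans_le hA)
  obtain ⟨n, hn⟩ := Nat.exists_eq_add_one.2 (finrank_pos (R := ℝ) (M := E))
  have hdet := abs_det_mul_norm_symm_le A
  simp only [hn, add_tsub_cancel_right] at hσ hdet ⊢
  have hσm : 0 < σ * μ.real T := by
    refine pos_of_mul_pos_left (b := |(A : E →L[ℝ] E).det|) ?_ (abs_nonneg _)
    linarith [pow_pos hh (n + 1)]
  rw [div_div, le_div_iff₀ (by positivity)]
  refine le_of_mul_le_mul_left ?_ (pow_pos hh n)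
  calc h ^ n * (‖(A.symm : E →L[ℝ] E)‖ * (ρ ^ n * h))
      = h ^ (n + 1) * (‖(A.symm : E →L[ℝ] E)‖ * ρ ^ n) := by ring
    _ ≤ σ * (|(A : E →L[ℝ] E).det| * μ.real T) * (‖(A.symm : E →L[ℝ] E)‖ * ρ ^ n) := by gcongr
    _ = σ * μ.real T * (|(A : E →L[ℝ] E).det| * ‖(A.symm : E →L[ℝ] E)‖) * ρ ^ n := by ring
    _ ≤ σ * μ.real T * (h / ρ) ^ n * ρ ^ n := by gcongr; exact hdet.trans (by gcongr)
    _ = h ^ n * (σ * μ.real T) := by rw [div_pow]; field_simp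

end InverseNorm

section NormComparison

variable {𝕜 V F G : Type*} [NontriviallyNormedField 𝕜] [AddCommGroup V] [Module 𝕜 V]
  [NormedAddCommGroup F] [NormedSpace 𝕜 F] [NormedAddCommGroup G] [NormedSpace 𝕜 G]

lemma exists_norm_le_mul_norm_of_injective [CompleteSpace 𝕜] [Module.Finite 𝕜 V]
    (Φ : V →ₗ[𝕜] F) {Ψ : V →ₗ[𝕜] G}
    (hΨ : Function.Injective Ψ) : ∃ C : ℝ, ∀ v, ‖Φ v‖ ≤ C * ‖Ψ v‖ := by
  let e := LinearEquiv.ofInjective Ψ hΨ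
  let g := LinearMap.toContinuousLinearMap (Φ ∘ₗ e.symm.toLinearMap)
  exact ⟨‖g‖, fun v ↦ by simpa [g, e] using g.le_opNorm (e v)⟩

variable {X : Type*} [MeasurableSpace X] {μ : Measure X} {p : ENNReal}

/-- A linear family of `p`-integrable functions, viewed as a linear map into `Lp`. -/
noncomputable def linearMapToLp (Φ : V →ₗ[𝕜] X → F) (hΦ : ∀ v, MemLp (Φ v) p μ) :
    V →ₗ[𝕜] Lp F p μ where
  toFun v := (hΦ v).toLp (Φ v)
  map_add' v w := by simp_rw [map_add]; rfl
  map_smul' r v := by simp_rw [map_smul]; rfl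

lemma norm_linearMapToLp_sq (Φ : V →ₗ[𝕜] X → F) (hΦ : ∀ v, MemLp (Φ v) 2 μ) (v : V) :
    ‖linearMapToLp Φ hΦ v‖ ^ 2 = ∫ x, ‖Φ v x‖ ^ 2 ∂μ := by
  have hnorm : ‖linearMapToLp Φ hΦ v‖ = lpNorm (Φ v) 2 μ :=
    (Lp.norm_toLp _ (hΦ v)).trans (toReal_eLpNorm (hΦ v).1)
  rw [hnorm, lpNorm_eq_integral_norm_rpow_toReal two_ne_zero ENNReal.ofNat_ne_top (hΦ v).1,
    ← Real.rpow_mul_natCast (by positivity)]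
  simp

lemma exists_integral_norm_sq_le [CompleteSpace 𝕜] [Module.Finite 𝕜 V]
    (Φ : V →ₗ[𝕜] X → F) {Ψ : V →ₗ[𝕜] X → G}
    (hΦ : ∀ v, MemLp (Φ v) 2 μ) (hΨ : ∀ v, MemLp (Ψ v) 2 μ)
    (hker : ∀ v, Ψ v =ᵐ[μ] 0 → v = 0) :
    ∃ C : ℝ, 0 ≤ C ∧ ∀ v, ∫ x, ‖Φ v x‖ ^ 2 ∂μ ≤ C * ∫ x, ‖Ψ v x‖ ^ 2 ∂μ := by
  have hinj : Function.Injective (linearMapToLp Ψ hΨ) :=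
    (injective_iff_map_eq_zero _).2 fun v hv ↦
      hker v (((hΨ v).toLp_eq_toLp_iff MemLp.zero).1 hv)
  obtain ⟨C, hle⟩ := exists_norm_le_mul_norm_of_injective (linearMapToLp Φ hΦ) hinj
  refine ⟨C ^ 2, by positivity, fun v ↦ ?_⟩
  rw [← norm_linearMapToLp_sq Φ hΦ, ← norm_linearMapToLp_sq Ψ hΨ, ← mul_pow]
  gcongr
  exact hle v

end NormComparison

lemma memLp_restrict_of_continuousOn {X F : Type*} [TopologicalSpace X] [T2Space X]
    [MeasurableSpace X] [OpensMeasurableSpace X] [NormedAddCommGroup F] {μ : Measure X}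
    [IsFiniteMeasureOnCompacts μ] {f : X → F} {T : Set X} (hf : ContinuousOn f T)
    (hT : IsCompact T) (p : ENNReal) : MemLp f p (μ.restrict T) := by
  have : IsFiniteMeasure (μ.restrict T) := ⟨by simpa using hT.measure_lt_top⟩
  obtain ⟨C, hC⟩ := hT.exists_bound_of_continuousOn hf
  exact .of_bound (hf.aestronglyMeasurable_of_isCompact hT hT.measurableSet) C
    (ae_restrict_of_forall_mem hT.measurableSet hC)

section Polynomial

open MvPolynomial

lemma totalDegree_bind₁_le_mul {R σ τ : Type*} [CommSemiring R] {g : σ → MvPolynomial τ R} {m : ℕ}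
    (hg : ∀ i, (g i).totalDegree ≤ m) (p : MvPolynomial σ R) :
    (bind₁ g p).totalDegree ≤ p.totalDegree * m := by
  conv_lhs => rw [p.as_sum, map_sum]
  refine totalDegree_finsetSum_le fun d hd ↦ ?_
  rw [bind₁_monomial]
  calc (C (p.coeff d) * ∏ i ∈ d.support, g i ^ d i).totalDegree
      ≤ (∏ i ∈ d.support, g i ^ d i).totalDegree := by
        simpa using totalDegree_mul (C (p.coeff d)) (∏ i ∈ d.support, g i ^ d i)
    _ ≤ ∑ i ∈ d.support, d i * m :=
        (totalDegree_finsetProd _ _).trans <| Finset.sum_le_sum fun i _ ↦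
          (totalDegree_pow _ _).trans (Nat.mul_le_mul_left _ (hg i))
    _ ≤ p.totalDegree * m := by
        rw [← Finset.sum_mul]
        exact Nat.mul_le_mul_right m (le_totalDegree hd)

variable {κ : Type*}

lemma exists_eval_eq_eval_affine [Finite κ] {ι : Type*}
    (A : EuclideanSpace ℝ κ →ₗ[ℝ] EuclideanSpace ℝ ι) (c : EuclideanSpace ℝ ι)
    (p : MvPolynomial ι ℝ) :
    ∃ q : MvPolynomial κ ℝ, q.totalDegree ≤ p.totalDegree ∧
      ∀ x : EuclideanSpace ℝ κ, eval x q = eval (A x + c) p := by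
  classical
  have := Fintype.ofFinite κ
  let g (i : ι) : MvPolynomial κ ℝ := ∑ j, C (A (EuclideanSpace.single j 1) i) * X j + C (c i)
  have hg (i : ι) : (g i).totalDegree ≤ 1 := by
    refine (totalDegree_add _ _).trans (max_le (totalDegree_finsetSum_le fun j _ ↦ ?_) (by simp))
    exact (totalDegree_mul _ _).trans (by simp)
  have hgeval (x : EuclideanSpace ℝ κ) (i : ι) : eval x (g i) = (A x + c) i := by
    conv_rhs => rw [← (EuclideanSpace.basisFun κ ℝ).sum_repr x]
    simp [g, mul_comm]
  refine ⟨bind₁ g p, by simpa using totalDegree_bind₁_le_mul hg p, fun x ↦ ?_⟩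
  calc eval x (bind₁ g p) = eval (fun i ↦ eval x (g i)) p :=
        eval₂Hom_bind₁ (RingHom.id ℝ) x.ofLp g p
    _ = eval (A x + c) p := by simp_rw [hgeval]

variable [Fintype κ]

lemma analyticOnNhd_eval (p : MvPolynomial κ ℝ) :
    AnalyticOnNhd ℝ (fun x : EuclideanSpace ℝ κ ↦ eval x p) Set.univ :=
  AnalyticOnNhd.eval_continuousLinearMap (EuclideanSpace.equiv κ ℝ).toContinuousLinearMap p

lemma contDiff_eval (n : WithTop ℕ∞) (p : MvPolynomial κ ℝ) :
    ContDiff ℝ n fun x : EuclideanSpace ℝ κ ↦ eval x p :=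
  contDiffOn_univ.1 ((analyticOnNhd_eval p).contDiffOn uniqueDiffOn_univ)

lemma eq_zero_of_eval_ae_eq_zero {T : Set (EuclideanSpace ℝ κ)} (hT : (interior T).Nonempty)
    {p : MvPolynomial κ ℝ}
    (hp : (fun x : EuclideanSpace ℝ κ ↦ eval x p) =ᵐ[volume.restrict T] 0) : p = 0 := by
  have hcont : Continuous fun x : EuclideanSpace ℝ κ ↦ eval x p := (contDiff_eval 0 p).continuous
  have heqOn : Set.EqOn (fun x : EuclideanSpace ℝ κ ↦ eval x p) 0 (interior T) :=
    Measure.eqOn_open_of_ae_eq (ae_restrict_of_ae_restrict_of_subset interior_subset hp)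
      isOpen_interior hcont.continuousOn continuousOn_const
  obtain ⟨x₀, hx₀⟩ := hT
  have hzero := (analyticOnNhd_eval p).eq_of_eventuallyEq analyticOnNhd_const
    (heqOn.eventuallyEq_of_mem (isOpen_interior.mem_nhds hx₀))
  refine MvPolynomial.funext fun x ↦ ?_
  exact (congrFun hzero (WithLp.toLp 2 x)).trans (map_zero _).symm

end Polynomial

section AffineBasis

lemma exists_continuousLinearEquiv_add_eq {ι E F : Type*}
    [NormedAddCommGroup E] [NormedSpace ℝ E] [FiniteDimensional ℝ E]
    [NormedAddCommGroup F] [NormedSpace ℝ F] (b : AffineBasis ι ℝ E) (a : AffineBasis ι ℝ F) :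
    ∃ (A : E ≃L[ℝ] F) (c : F), ∀ i, A (b i) + c = a i := by
  classical
  obtain ⟨i₀⟩ := b.nonempty
  let A := ((b.basisOf i₀).equiv (a.basisOf i₀) (Equiv.refl _)).toContinuousLinearEquiv
  refine ⟨A, a i₀ - A (b i₀), fun i ↦ ?_⟩
  suffices A (b i - b i₀) = a i - a i₀ by rw [add_sub_left_comm, ← map_sub, this, add_sub_cancel]
  obtain rfl | hi := eq_or_ne i i₀
  · simp
  · simpa [A] using (b.basisOf i₀).equiv_apply ⟨i, hi⟩ (a.basisOf i₀) (Equiv.refl _)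

variable {ι 𝕜 E F : Type*} [AddCommGroup E] [AddCommGroup F]

lemma image_convexHull_range_affine [Field 𝕜] [LinearOrder 𝕜] [IsStrictOrderedRing 𝕜]
    [Module 𝕜 E] [Module 𝕜 F] (A : E →ₗ[𝕜] F) (c : F) {b : ι → E} {a : ι → F}
    (hA : ∀ i, A (b i) + c = a i) :
    (fun x ↦ A x + c) '' convexHull 𝕜 (Set.range b) = convexHull 𝕜 (Set.range a) := by
  have himage := (A.toAffineMap + AffineMap.const 𝕜 E c).image_convexHull (Set.range b)
  rw [← Set.range_comp, (funext hA : ⇑(A.toAffineMap + AffineMap.const 𝕜 E c) ∘ b = a)] at himage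
  exact himage

lemma coord_affine_eq_coord [Ring 𝕜] [Module 𝕜 E] [Module 𝕜 F] [DecidableEq ι]
    (b : AffineBasis ι 𝕜 E) (A : E →ₗ[𝕜] F) (c : F)
    {L : ι → F →ᵃ[𝕜] 𝕜} (hL : ∀ i j, L i (A (b j) + c) = if i = j then 1 else 0) (i : ι) (x : E) :
    L i (A x + c) = b.coord i x := by
  have hext : (L i).comp (A.toAffineMap + AffineMap.const 𝕜 E c) = b.coord i := by
    refine AffineMap.ext_on b.tot ?_
    rintro _ ⟨j, rfl⟩
    exact (hL i j).trans (b.coord_apply i j).symm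
  exact congr($hext x)

end AffineBasis

section InverseEstimate

open MvPolynomial

variable {κ : Type*} [Fintype κ]

lemma exists_setIntegral_norm_fderiv_mul_eval_sq_le {T : Set (EuclideanSpace ℝ κ)}
    (hT : IsCompact T) (hint : (interior T).Nonempty) {w : EuclideanSpace ℝ κ → ℝ}
    (hw : ContDiff ℝ 1 w) (k : ℕ) :
    ∃ M : ℝ, 0 ≤ M ∧ ∀ q : MvPolynomial κ ℝ, q.totalDegree ≤ k →
      ∫ x in T, ‖fderiv ℝ (fun z ↦ w z * eval z q) x‖ ^ 2 ≤ M * ∫ x in T, eval x q ^ 2 := by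
  have hwdiff : Differentiable ℝ w := hw.differentiable one_ne_zero
  have hdiff (q : MvPolynomial κ ℝ) : Differentiable ℝ fun z : EuclideanSpace ℝ κ ↦ eval z q :=
    (contDiff_eval 1 q).differentiable one_ne_zero
  let Ψ : restrictTotalDegree κ ℝ k →ₗ[ℝ] EuclideanSpace ℝ κ → ℝ :=
    { toFun := fun q z ↦ eval z q.1
      map_add' := fun q r ↦ by ext z; simp
      map_smul' := fun a q ↦ by ext z; simp }
  let Φ : restrictTotalDegree κ ℝ k →ₗ[ℝ] EuclideanSpace ℝ κ → EuclideanSpace ℝ κ →L[ℝ] ℝ :=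
    { toFun := fun q ↦ fderiv ℝ fun z ↦ w z * eval z q.1
      map_add' := fun q r ↦ by
        ext1 z
        simp_rw [Submodule.coe_add, map_add, mul_add]
        exact fderiv_fun_add (hwdiff.mul (hdiff q) z) (hwdiff.mul (hdiff r) z)
      map_smul' := fun a q ↦ by
        ext1 z
        simp_rw [Submodule.coe_smul, smul_eval, mul_left_comm (w _)]
        exact fderiv_fun_const_smul (hwdiff.mul (hdiff q) z) a }
  have hΦ (q) : MemLp (Φ q) 2 (volume.restrict T) :=
    memLp_restrict_of_continuousOn
      ((hw.mul (contDiff_eval 1 q.1)).continuous_fderiv one_ne_zero).continuousOn hT 2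
  have hΨ (q) : MemLp (Ψ q) 2 (volume.restrict T) :=
    memLp_restrict_of_continuousOn (contDiff_eval 0 q.1).continuous.continuousOn hT 2
  obtain ⟨M, hM, hle⟩ := exists_integral_norm_sq_le Φ hΦ hΨ fun q hq ↦
    Subtype.ext (eq_zero_of_eval_ae_eq_zero hint hq)
  refine ⟨M, hM, fun q hq ↦ ?_⟩
  simpa [Φ, Ψ] using hle ⟨q, (mem_restrictTotalDegree κ k q).2 hq⟩

lemma exists_inverse_estimate_affine_image [Nonempty κ] {T : Set (EuclideanSpace ℝ κ)}
    (hT : IsCompact T) (hint : (interior T).Nonempty) {w₀ : EuclideanSpace ℝ κ → ℝ}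
    (hw₀ : ContDiff ℝ 1 w₀) (k : ℕ) (σ : ℝ) :
    ∃ C : ℝ, 0 < C ∧
      ∀ (A : EuclideanSpace ℝ κ ≃L[ℝ] EuclideanSpace ℝ κ) (c : EuclideanSpace ℝ κ)
        {τ : Set (EuclideanSpace ℝ κ)}, (fun x ↦ A x + c) '' T = τ →
      Metric.diam τ ^ Fintype.card κ ≤ σ * volume.real τ →
      ∀ {w : EuclideanSpace ℝ κ → ℝ}, (∀ x, w (A x + c) = w₀ x) →
      ∀ {p : MvPolynomial κ ℝ}, p.totalDegree ≤ k →
        ∫ y in τ, ‖fderiv ℝ (fun z ↦ w z * eval z p) y‖ ^ 2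
          ≤ C * (Metric.diam τ ^ 2)⁻¹ * ∫ y in τ, eval y p ^ 2 := by
  obtain ⟨M, hM, hle⟩ := exists_setIntegral_norm_fderiv_mul_eval_sq_le hT hint hw₀ k
  obtain ⟨x₀, hx₀⟩ := hint
  obtain ⟨ρ, hρ, hball⟩ := Metric.nhds_basis_closedBall.mem_iff.1 (mem_interior_iff_mem_nhds.1 hx₀)
  set D := σ * volume.real T / ρ ^ (Fintype.card κ - 1) with hD
  refine ⟨D ^ 2 * M + 1, by positivity, ?_⟩
  rintro A c τ rfl hσ w hw p hp
  obtain ⟨q, hqdeg, hq⟩ := exists_eval_eq_eval_affine A.toLinearMap c p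
  have hpoly (x : EuclideanSpace ℝ κ) : eval (A x + c) p = eval x q := (hq x).symm
  have hcomp : (fun z ↦ w (A z + c) * eval (A z + c) p) = fun z ↦ w₀ z * eval z q :=
    funext fun z ↦ by rw [hw, hpoly]
  have hsymm := norm_symm_le_div_diam_image volume A c hρ hball
    (hT.image (by fun_prop)).isBounded (by simpa using hσ)
  rw [finrank_euclideanSpace, ← hD] at hsymm
  set h := Metric.diam ((fun x ↦ A x + c) '' T)
  have hintegrable : IntegrableOn (fun x ↦ ‖fderiv ℝ (fun z ↦ w₀ z * eval z q) x‖ ^ 2) T :=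
    (((hw₀.mul (contDiff_eval 1 q)).continuous_fderiv one_ne_zero).norm.pow 2).continuousOn
      |>.integrableOn_compact hT
  have hgrad := setIntegral_norm_fderiv_sq_image_affine_le volume A c hT.measurableSet
    (f := fun z ↦ w z * eval z p) (by rwa [hcomp])
  have hmass := setIntegral_image_affine volume A c hT.measurableSet fun y ↦ eval y p ^ 2
  simp_rw [hcomp] at hgrad
  simp_rw [hpoly, smul_eq_mul] at hmass
  rw [hmass]
  set δ := |(A : EuclideanSpace ℝ κ →L[ℝ] EuclideanSpace ℝ κ).det|
  calc ∫ y in (fun x ↦ A x + c) '' T, ‖fderiv ℝ (fun z ↦ w z * eval z p) y‖ ^ 2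
      ≤ δ * ((D / h) ^ 2 * (M * ∫ x in T, eval x q ^ 2)) := by
        refine hgrad.trans ?_
        gcongr
        exact hle q (hqdeg.trans hp)
    _ = D ^ 2 * M * (h ^ 2)⁻¹ * (δ * ∫ x in T, eval x q ^ 2) := by
        rw [div_pow]
        ring
    _ ≤ (D ^ 2 * M + 1) * (h ^ 2)⁻¹ * (δ * ∫ x in T, eval x q ^ 2) := by
        gcongr
        linarith

theorem element_bubble_inverse_estimate_general
    {ι : Type*} [Fintype ι] [DecidableEq ι] [Nonempty κ]
    (hcard : Fintype.card ι = Fintype.card κ + 1)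
    {W : (ι → ℝ) → ℝ} (hW : ContDiff ℝ 1 W) (k : ℕ) (σ : ℝ) :
    ∃ C : ℝ, 0 < C ∧ ∀ a : ι → EuclideanSpace ℝ κ, AffineIndependent ℝ a →
      letI τ : Set (EuclideanSpace ℝ κ) := convexHull ℝ (Set.range a)
      Metric.diam τ ^ Fintype.card κ ≤ σ * volume.real τ →
      ∀ L : ι → EuclideanSpace ℝ κ →ᵃ[ℝ] ℝ, (∀ i j, L i (a j) = if i = j then 1 else 0) →
      ∀ p : MvPolynomial κ ℝ, p.totalDegree ≤ k →
        ∫ x in τ, ‖fderiv ℝ (fun y ↦ W (fun i ↦ L i y) * eval y p) x‖ ^ 2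
          ≤ C * (Metric.diam τ ^ 2)⁻¹ * ∫ x in τ, eval x p ^ 2 := by
  have hfinrank : Fintype.card ι = Module.finrank ℝ (EuclideanSpace ℝ κ) + 1 := by simpa using hcard
  obtain ⟨b⟩ := AffineBasis.exists_affineBasis_of_finiteDimensional
    (k := ℝ) (P := EuclideanSpace ℝ κ) hfinrank
  have hcoord (i : ι) : ContDiff ℝ 1 (b.coord i) :=
    (⟨b.coord i, (b.coord i).continuous_of_finiteDimensional⟩ :
      EuclideanSpace ℝ κ →ᴬ[ℝ] ℝ).contDiff
  obtain ⟨C, hC, hle⟩ := exists_inverse_estimate_affine_image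
    ((Set.finite_range b).isCompact_convexHull ℝ) ⟨_, b.centroid_mem_interior_convexHull⟩
    (hW.comp (contDiff_pi.2 hcoord)) k σ
  refine ⟨C, hC, fun a ha hσ L hL p hp ↦ ?_⟩
  obtain ⟨A, c, hA⟩ := exists_continuousLinearEquiv_add_eq b
    ⟨a, ha, ha.affineSpan_eq_top_iff_card_eq_finrank_add_one.2 hfinrank⟩
  refine hle A c (image_convexHull_range_affine A.toLinearMap c hA) hσ (fun x ↦ ?_) hp
  exact congrArg W (funext fun i ↦
    coord_affine_eq_coord b A.toLinearMap c (fun i j ↦ (congrArg (L i) (hA j)).trans (hL i j)) i x)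

end InverseEstimate

/-- Element bubble inverse estimate (4.2): there is `C > 0` depending only on the
polynomial degree `k` and the shape-regularity constant `σ` such that for every
nondegenerate triangle `τ ⊂ ℝ²` with `h_τ² ≤ σ |τ|`, barycentric coordinates
`L 0, L 1, L 2`, element bubble `ψ_τ = 27 (L 0)(L 1)(L 2)`, and every polynomial `v`
of total degree at most `k`,
`∫_τ |∇(ψ_τ v)|² ≤ C h_τ⁻² ∫_τ v²`. -/
theorem element_bubble_inverse_estimate (k : ℕ) (σ : ℝ) (hσ : 0 < σ) :
    ∃ C : ℝ, 0 < C ∧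
      ∀ (a : Fin 3 → EuclideanSpace ℝ (Fin 2)), AffineIndependent ℝ a →
      letI τ : Set (EuclideanSpace ℝ (Fin 2)) := convexHull ℝ (Set.range a)
      Metric.diam τ ^ 2 ≤ σ * (volume τ).toReal →
      ∀ (L : Fin 3 → (EuclideanSpace ℝ (Fin 2) →ᵃ[ℝ] ℝ)),
        (∀ i j, L i (a j) = if i = j then 1 else 0) →
      ∀ (p : MvPolynomial (Fin 2) ℝ), p.totalDegree ≤ k →
        letI ψ : EuclideanSpace ℝ (Fin 2) → ℝ := fun x => 27 * L 0 x * L 1 x * L 2 x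
        letI v : EuclideanSpace ℝ (Fin 2) → ℝ := fun x => MvPolynomial.eval (fun i => x i) p
        (∫ x in τ, ‖fderiv ℝ (fun y => ψ y * v y) x‖ ^ 2) ≤
          C * (Metric.diam τ ^ 2)⁻¹ * ∫ x in τ, v x ^ 2 :=
  element_bubble_inverse_estimate_general (κ := Fin 2) (W := fun t ↦ 27 * t 0 * t 1 * t 2)
    (by simp) (by fun_prop) k σ
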